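/- Let (α;β) and (α';β') be upper-left weak bicompositions, i.e. pairs of weak compositions of equal length whose first entries α, α' are left weak compositions. Then for each such pair the power series M_{(α;β)}(X,Y) (coefficient at a monomial ν being the number of strictly increasing tuples I with x_I^α·y_I^β = ν) is well defined (all these counts are finite), every bicomposition occurring in the quasi-shuffle product (α;β)*(α';β') over the monoid ℕ×ℕ is again upper-left weak, and M_{(α;β)}(X,Y) · M_{(α';β')}(X,Y) = M_{(α;β)*(α';β')}(X,Y) in ℚ[[X,Y]], where M_{(·)}(X,Y) is extended ℚ-linearly. -/

import Mathlib

open Finset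

/-- quasi-shuffle product on the free ℚ-module on lists over an additive commutative monoid -/
noncomputable def qsh {A : Type} [AddCommMonoid A] : List A → List A → (List A →₀ ℚ)
  | [], b => Finsupp.single b 1
  | a :: a', [] => Finsupp.single (a :: a') 1
  | a :: a', b :: b' =>
      (qsh a' (b :: b')).mapDomain (a :: ·) +
      (qsh (a :: a') b').mapDomain (b :: ·) +
      (qsh a' b').mapDomain ((a + b) :: ·)
termination_by a b => a.length + b.length

/-- an upper-left weak bicomposition (a list of columns whose first-row list is left weak) -/
def UpperLeftWeak (c : List (ℕ × ℕ)) : Prop := ∀ p : ℕ × ℕ, c.getLast? = some p → 0 < p.1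

/-- the bimonomial quasisymmetric function M_{(α;β)}(X,Y) of a bicomposition (list of columns):
its coefficient at a monomial ν is the number of strictly increasing tuples I with
x_I^α·y_I^β = ν (`Set.ncard` takes the value 0 on infinite sets). -/
noncomputable def biM (c : List (ℕ × ℕ)) : MvPowerSeries (ℕ+ ⊕ ℕ+) ℚ :=
  fun ν => (Set.ncard {I : Fin c.length → ℕ+ | StrictMono I ∧
    (∑ j, (Finsupp.single (Sum.inl (I j)) (c.get j).1 +
           Finsupp.single (Sum.inr (I j)) (c.get j).2)) = ν} : ℚ)

/-- the monomial of x- and y-variables x_I^α·y_I^β attached to a bicomposition and a tuple I -/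
noncomputable def bimon (c : List (ℕ × ℕ)) (I : Fin c.length → ℕ+) : (ℕ+ ⊕ ℕ+) →₀ ℕ :=
  ∑ j, (Finsupp.single (Sum.inl (I j)) (c.get j).1 +
        Finsupp.single (Sum.inr (I j)) (c.get j).2)

/-!
Fix a finite set `S` of admissible indices. Splitting the increasing tuples in `S` according to
whether they start at `min S` gives a recursion for the truncated sums
`∑ x_I^α y_I^β` (`I` in `S`); the three terms of the quasi-shuffle recursion are exactly the cases
where the minimum is used by the first factor, by the second, or by both, so truncated sums multiply
by quasi-shuffle. When the last column of a bicomposition is nonzero, the monomial `x_I^α y_I^β`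
sees the largest index of `I`, so a given coefficient involves only finitely many `I` and is
unchanged by truncation at a large enough index. The bicompositions whose last
column lies in a fixed semigroup avoiding zero, such as `{(p, q) | 0 < p}`, are stable under
quasi-shuffle because a merged last column is a sum of two last columns.
-/

section LastMem

variable {A : Type*} [Add A]

/-- The last entry of the list `c`, if there is one, lies in `T`. Left weakness and its
two-row variants are of this form. -/
def LastMem (T : AddSubsemigroup A) (c : List A) : Prop :=
  ∀ p, c.getLast? = some p → p ∈ T

theorem lastMem_cons {T : AddSubsemigroup A} {a : A} {c : List A} :
    LastMem T (a :: c) ↔ (c = [] → a ∈ T) ∧ LastMem T c := by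
  cases c <;> simp [LastMem, List.getLast?_cons_cons]

end LastMem

section QuasiShuffle

variable {A : Type} [AddCommMonoid A]

theorem qsh_nil_left (c : List A) : qsh [] c = Finsupp.single c 1 := by
  rw [qsh]

theorem qsh_nil_right (c : List A) : qsh c [] = Finsupp.single c 1 := by
  cases c <;> rw [qsh]

theorem qsh_cons_cons (a b : A) (c c' : List A) :
    qsh (a :: c) (b :: c') =
      (qsh c (b :: c')).mapDomain (a :: ·) + (qsh (a :: c) c').mapDomain (b :: ·) +
        (qsh c c').mapDomain ((a + b) :: ·) := by
  rw [qsh]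

theorem mem_support_qsh_cons_cons {a b : A} {c c' d : List A}
    (hd : d ∈ (qsh (a :: c) (b :: c')).support) :
    (∃ e ∈ (qsh c (b :: c')).support, a :: e = d) ∨
      (∃ e ∈ (qsh (a :: c) c').support, b :: e = d) ∨
        ∃ e ∈ (qsh c c').support, (a + b) :: e = d := by
  classical
  rw [qsh_cons_cons] at hd
  have mem_image {x : A} {f : List A →₀ ℚ} (h : d ∈ (f.mapDomain (x :: ·)).support) :
      ∃ e ∈ f.support, x :: e = d :=
    mem_image.1 (Finsupp.mapDomain_support h)
  rcases mem_union.1 (Finsupp.support_add hd) with hd | hd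
  · rcases mem_union.1 (Finsupp.support_add hd) with hd | hd
    · exact .inl (mem_image hd)
    · exact .inr (.inl (mem_image hd))
  · exact .inr (.inr (mem_image hd))

theorem eq_nil_of_nil_mem_support_qsh {c c' : List A} (h : [] ∈ (qsh c c').support) :
    c = [] ∧ c' = [] := by
  rcases c with _ | ⟨a, c⟩
  · simpa [qsh_nil_left, Finsupp.single_apply] using h
  rcases c' with _ | ⟨b, c'⟩
  · simp [qsh_nil_right] at h
  · simpa using mem_support_qsh_cons_cons h

theorem LastMem.of_mem_support_qsh {T : AddSubsemigroup A} {c c' d : List A}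
    (hc : LastMem T c) (hc' : LastMem T c') (hd : d ∈ (qsh c c').support) : LastMem T d := by
  induction c, c' using qsh.induct generalizing d with
  | case1 c' =>
    obtain rfl : d = c' := by simpa [qsh_nil_left, Finsupp.single_apply, eq_comm] using hd
    exact hc'
  | case2 a c =>
    obtain rfl : d = a :: c := by simpa [qsh_nil_right, Finsupp.single_apply, eq_comm] using hd
    exact hc
  | case3 a c b c' ih_left ih_right ih_both =>
    obtain ⟨ha, hc₀⟩ := lastMem_cons.1 hc
    obtain ⟨hb, hc₀'⟩ := lastMem_cons.1 hc'
    rcases mem_support_qsh_cons_cons hd with ⟨e, he, rfl⟩ | ⟨e, he, rfl⟩ | ⟨e, he, rfl⟩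
    · refine lastMem_cons.2 ⟨?_, ih_left hc₀ hc' he⟩
      rintro rfl
      exact ha (eq_nil_of_nil_mem_support_qsh he).1
    · refine lastMem_cons.2 ⟨?_, ih_right hc hc₀' he⟩
      rintro rfl
      exact hb (eq_nil_of_nil_mem_support_qsh he).2
    · refine lastMem_cons.2 ⟨?_, ih_both hc₀ hc₀' he⟩
      rintro rfl
      obtain ⟨hc_nil, hc'_nil⟩ := eq_nil_of_nil_mem_support_qsh he
      exact T.add_mem (ha hc_nil) (hb hc'_nil)

end QuasiShuffle

section Truncation

variable {ι : Type*} [Preorder ι]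

open Classical in
/-- The strictly increasing `n`-tuples with entries in the finite set `S`. -/
noncomputable def strictMonoTuples (n : ℕ) (S : Finset ι) : Finset (Fin n → ι) :=
  {I ∈ Fintype.piFinset fun _ => S | StrictMono I}

theorem mem_strictMonoTuples {n : ℕ} {S : Finset ι} {I : Fin n → ι} :
    I ∈ strictMonoTuples n S ↔ (∀ j, I j ∈ S) ∧ StrictMono I := by
  simp [strictMonoTuples]

theorem strictMonoTuples_zero (S : Finset ι) : strictMonoTuples 0 S = {Fin.elim0} := by
  ext I
  simp [mem_strictMonoTuples, Subsingleton.strictMono, Subsingleton.elim I Fin.elim0]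

theorem strictMonoTuples_succ_empty (n : ℕ) : strictMonoTuples (n + 1) (∅ : Finset ι) = ∅ := by
  ext I
  simp [mem_strictMonoTuples]

theorem cons_mem_strictMonoTuples_insert [DecidableEq ι] {n : ℕ} {S : Finset ι} {i : ι}
    (hi : ∀ x ∈ S, i < x) {k : ι} {I : Fin n → ι} :
    (Fin.cons k I : Fin (n + 1) → ι) ∈ strictMonoTuples (n + 1) (insert i S) ↔
      (Fin.cons k I : Fin (n + 1) → ι) ∈ strictMonoTuples (n + 1) S ∨
        k = i ∧ I ∈ strictMonoTuples n S := by
  simp only [mem_strictMonoTuples, Fin.forall_fin_succ, Fin.cons_zero, Fin.cons_succ,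
    Fin.strictMono_cons, mem_insert]
  constructor
  · rintro ⟨⟨hk, hI⟩, hkI, hmono⟩
    have hle : i ≤ k := by
      rcases hk with rfl | hk
      exacts [le_rfl, (hi k hk).le]
    have hIS (j : Fin n) : I j ∈ S := (hI j).resolve_left (hle.trans_lt (hkI j)).ne'
    rcases hk with rfl | hk
    exacts [.inr ⟨rfl, hIS, hmono⟩, .inl ⟨⟨hk, hIS⟩, hkI, hmono⟩]
  · rintro (⟨⟨hk, hI⟩, hmono⟩ | ⟨rfl, hI, hmono⟩)
    exacts [⟨⟨.inr hk, fun j => .inr (hI j)⟩, hmono⟩,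
      ⟨⟨.inl rfl, fun j => .inr (hI j)⟩, fun j => hi _ (hI j), hmono⟩]

theorem strictMonoTuples_succ_insert [DecidableEq ι] {n : ℕ} {S : Finset ι} {i : ι}
    (hi : ∀ x ∈ S, i < x) :
    strictMonoTuples (n + 1) (insert i S) =
      strictMonoTuples (n + 1) S ∪ (strictMonoTuples n S).image (Fin.cons i) := by
  ext I
  induction I using Fin.consCases with
  | cons k I =>
    simp [cons_mem_strictMonoTuples_insert hi, Fin.cons_inj, and_comm, eq_comm]

theorem disjoint_strictMonoTuples_image_cons [DecidableEq ι] {n : ℕ} {S : Finset ι} {i : ι}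
    (hi : ∀ x ∈ S, i < x) :
    Disjoint (strictMonoTuples (n + 1) S) ((strictMonoTuples n S).image (Fin.cons i)) := by
  rw [disjoint_right]
  intro I hI hIS
  obtain ⟨J, -, rfl⟩ := mem_image.1 hI
  exact (hi i ((mem_strictMonoTuples.1 hIS).1 0)).false

variable {A R : Type*} [CommSemiring R] (w : ι → A → R)

/-- The monomial quasisymmetric function of the list `c`, truncated to indices in `S`:
the column `a` placed at the index `i` contributes the factor `w i a`. -/
noncomputable def truncQSym (S : Finset ι) (c : List A) : R :=
  ∑ I ∈ strictMonoTuples c.length S, ∏ j, w (I j) (c.get j)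

theorem truncQSym_nil (S : Finset ι) : truncQSym w S [] = 1 := by
  simp [truncQSym, strictMonoTuples_zero]

theorem truncQSym_empty_cons (a : A) (c : List A) : truncQSym w ∅ (a :: c) = 0 := by
  simp [truncQSym, strictMonoTuples_succ_empty]

theorem truncQSym_insert_cons [DecidableEq ι] {S : Finset ι} {i : ι} (hi : ∀ x ∈ S, i < x)
    (a : A) (c : List A) :
    truncQSym w (insert i S) (a :: c) = truncQSym w S (a :: c) + w i a * truncQSym w S c := by
  simp only [truncQSym, List.length_cons]
  rw [strictMonoTuples_succ_insert hi, sum_union (disjoint_strictMonoTuples_image_cons hi),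
    sum_image (Fin.cons_right_injective (α := fun _ => ι) i).injOn, mul_sum]
  simp [Fin.prod_univ_succ]

variable [Algebra ℚ R]

theorem linearCombination_truncQSym_empty_mapDomain_cons (a : A) (f : List A →₀ ℚ) :
    Finsupp.linearCombination ℚ (truncQSym w ∅) (f.mapDomain (a :: ·)) = 0 := by
  have h : truncQSym w ∅ ∘ (a :: ·) = 0 := funext fun c => truncQSym_empty_cons w a c
  rw [Finsupp.linearCombination_mapDomain, h, Finsupp.linearCombination_zero_apply]

theorem linearCombination_truncQSym_insert_mapDomain_cons [DecidableEq ι] {S : Finset ι} {i : ι}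
    (hi : ∀ x ∈ S, i < x) (a : A) (f : List A →₀ ℚ) :
    Finsupp.linearCombination ℚ (truncQSym w (insert i S)) (f.mapDomain (a :: ·)) =
      Finsupp.linearCombination ℚ (truncQSym w S) (f.mapDomain (a :: ·)) +
        w i a * Finsupp.linearCombination ℚ (truncQSym w S) f := by
  rw [Finsupp.linearCombination_mapDomain, Finsupp.linearCombination_mapDomain]
  simp only [Finsupp.linearCombination_apply, Function.comp_apply,
    truncQSym_insert_cons w hi, smul_add, Finsupp.sum_add,
    Finsupp.mul_sum, mul_smul_comm]

end Truncation

theorem truncQSym_mul {ι : Type*} [LinearOrder ι] {A : Type} [AddCommMonoid A] {R : Type*}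
    [CommSemiring R] [Algebra ℚ R] (w : ι → A → R) (hw : ∀ i a b, w i (a + b) = w i a * w i b)
    (S : Finset ι) (c c' : List A) :
    truncQSym w S c * truncQSym w S c' =
      Finsupp.linearCombination ℚ (truncQSym w S) (qsh c c') := by
  induction S using Finset.induction_on_min generalizing c c' with
  | empty =>
    rcases c with _ | ⟨a, c⟩
    · simp [truncQSym_nil, qsh_nil_left]
    rcases c' with _ | ⟨b, c'⟩
    · simp [truncQSym_nil, qsh_nil_right]
    simp only [qsh_cons_cons, map_add, linearCombination_truncQSym_empty_mapDomain_cons,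
      truncQSym_empty_cons, mul_zero, add_zero]
  | insert i S hi ih =>
    rcases c with _ | ⟨a, c⟩
    · simp [truncQSym_nil, qsh_nil_left]
    rcases c' with _ | ⟨b, c'⟩
    · simp [truncQSym_nil, qsh_nil_right]
    have ih_cons := ih (a :: c) (b :: c')
    rw [qsh_cons_cons, map_add, map_add] at ih_cons
    rw [qsh_cons_cons, map_add, map_add, truncQSym_insert_cons w hi, truncQSym_insert_cons w hi]
    simp only [linearCombination_truncQSym_insert_mapDomain_cons w hi, ← ih, hw]
    calc (truncQSym w S (a :: c) + w i a * truncQSym w S c) *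
            (truncQSym w S (b :: c') + w i b * truncQSym w S c')
        = truncQSym w S (a :: c) * truncQSym w S (b :: c') +
            w i a * (truncQSym w S c * truncQSym w S (b :: c')) +
            w i b * (truncQSym w S (a :: c) * truncQSym w S c') +
            w i a * w i b * (truncQSym w S c * truncQSym w S c') := by ring
      _ = _ := by rw [ih_cons]; ring

section Bimonomial

/-- The exponent of `x_i^p y_i^q`, as an additive map of the column `(p, q)`. -/
noncomputable def colExponent (i : ℕ+) : ℕ × ℕ →+ (ℕ+ ⊕ ℕ+) →₀ ℕ :=
  (Finsupp.singleAddHom (Sum.inl i)).coprod (Finsupp.singleAddHom (Sum.inr i))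

theorem bimon_eq_sum_colExponent (c : List (ℕ × ℕ)) (I : Fin c.length → ℕ+) :
    bimon c I = ∑ j, colExponent (I j) (c.get j) :=
  rfl

/-- The monomial `x_i^p y_i^q` attached to the column `(p, q)` placed at the index `i`. -/
noncomputable def colMonomial (i : ℕ+) (p : ℕ × ℕ) : MvPowerSeries (ℕ+ ⊕ ℕ+) ℚ :=
  MvPowerSeries.monomial (colExponent i p) 1

theorem colMonomial_add (i : ℕ+) (p q : ℕ × ℕ) :
    colMonomial i (p + q) = colMonomial i p * colMonomial i q := by
  simp [colMonomial, MvPowerSeries.monomial_mul_monomial]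

/-- The largest index of a variable, from either family, occurring in the monomial `ν`
(`1` if there is none). -/
def maxIndex (ν : (ℕ+ ⊕ ℕ+) →₀ ℕ) : ℕ+ :=
  ν.support.sup (Sum.elim id id)

theorem maxIndex_mono : Monotone maxIndex :=
  fun _ _ h => sup_mono (Finsupp.support_mono h)

theorem le_maxIndex_colExponent (i : ℕ+) {p : ℕ × ℕ} (hp : p ≠ 0) :
    i ≤ maxIndex (colExponent i p) := by
  have h : p.1 ≠ 0 ∨ p.2 ≠ 0 := by
    simpa [Prod.ext_iff, or_iff_not_imp_left] using hp
  rcases h with h | h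
  · exact le_sup (f := Sum.elim id id) (b := Sum.inl i) (by simp [colExponent, h])
  · exact le_sup (f := Sum.elim id id) (b := Sum.inr i) (by simp [colExponent, h])

variable {T : AddSubsemigroup (ℕ × ℕ)} {c : List (ℕ × ℕ)}

theorem le_maxIndex_bimon (hT : 0 ∉ T) (hc : LastMem T c) {I : Fin c.length → ℕ+}
    (hI : StrictMono I) (j : Fin c.length) : I j ≤ maxIndex (bimon c I) := by
  let last : Fin c.length := ⟨c.length - 1, by have := j.pos; omega⟩
  have hlast : c.get last ≠ 0 :=
    ne_of_mem_of_not_mem (hc _ (by simp [last, List.getLast?_eq_getElem?])) hT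
  calc I j ≤ I last := hI.monotone (Nat.le_sub_one_of_lt j.isLt)
    _ ≤ maxIndex (colExponent (I last) (c.get last)) := le_maxIndex_colExponent _ hlast
    _ ≤ maxIndex (bimon c I) := maxIndex_mono <| by
      rw [bimon_eq_sum_colExponent]
      exact single_le_sum (f := fun k => colExponent (I k) (c.get k)) (fun _ _ => zero_le)
        (mem_univ last)

theorem setOf_strictMono_bimon_eq (hT : 0 ∉ T) (hc : LastMem T c) {ν : (ℕ+ ⊕ ℕ+) →₀ ℕ} {N : ℕ+}
    (hN : maxIndex ν ≤ N) :
    {I : Fin c.length → ℕ+ | StrictMono I ∧ bimon c I = ν} =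
      ↑{I ∈ strictMonoTuples c.length (Icc 1 N) | bimon c I = ν} := by
  ext I
  simp only [Set.mem_ofPred_eq, coe_filter, mem_strictMonoTuples, mem_Icc, one_le, true_and]
  constructor
  · rintro ⟨hI, rfl⟩
    exact ⟨⟨fun j => (le_maxIndex_bimon hT hc hI j).trans hN, hI⟩, rfl⟩
  · rintro ⟨⟨-, hI⟩, hν⟩
    exact ⟨hI, hν⟩

theorem finite_setOf_strictMono_bimon_eq (hT : 0 ∉ T) (hc : LastMem T c)
    (ν : (ℕ+ ⊕ ℕ+) →₀ ℕ) : {I : Fin c.length → ℕ+ | StrictMono I ∧ bimon c I = ν}.Finite := by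
  rw [setOf_strictMono_bimon_eq hT hc le_rfl]
  exact finite_toSet _

theorem coeff_truncQSym_colMonomial (S : Finset ℕ+) (c : List (ℕ × ℕ)) (ν : (ℕ+ ⊕ ℕ+) →₀ ℕ) :
    MvPowerSeries.coeff ν (truncQSym colMonomial S c) =
      #{I ∈ strictMonoTuples c.length S | bimon c I = ν} := by
  classical
  simp only [truncQSym, colMonomial, MvPowerSeries.prod_monomial, ← bimon_eq_sum_colExponent,
    prod_const_one, map_sum, MvPowerSeries.coeff_monomial, natCast_card_filter, eq_comm]

theorem coeff_biM_eq_coeff_truncQSym (hT : 0 ∉ T) (hc : LastMem T c) {ν : (ℕ+ ⊕ ℕ+) →₀ ℕ}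
    {N : ℕ+} (hN : maxIndex ν ≤ N) :
    MvPowerSeries.coeff ν (biM c) =
      MvPowerSeries.coeff ν (truncQSym colMonomial (Icc 1 N) c) := by
  calc MvPowerSeries.coeff ν (biM c)
      = (Set.ncard {I : Fin c.length → ℕ+ | StrictMono I ∧ bimon c I = ν} : ℚ) := rfl
    _ = MvPowerSeries.coeff ν (truncQSym colMonomial (Icc 1 N) c) := by
      rw [setOf_strictMono_bimon_eq hT hc hN, Set.ncard_coe_finset, coeff_truncQSym_colMonomial]

theorem biM_mul_biM (hT : 0 ∉ T) {c' : List (ℕ × ℕ)} (hc : LastMem T c) (hc' : LastMem T c') :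
    biM c * biM c' = (qsh c c').sum fun d q => q • biM d := by
  classical
  ext ν
  let trunc := truncQSym colMonomial (Icc 1 (maxIndex ν))
  calc MvPowerSeries.coeff ν (biM c * biM c')
      = MvPowerSeries.coeff ν (trunc c * trunc c') := by
        rw [MvPowerSeries.coeff_mul, MvPowerSeries.coeff_mul]
        refine sum_congr rfl fun μ hμ => ?_
        have hfst := maxIndex_mono (HasAntidiagonal.antidiagonal.fst_le hμ)
        have hsnd := maxIndex_mono (HasAntidiagonal.antidiagonal.snd_le hμ)
        rw [coeff_biM_eq_coeff_truncQSym hT hc hfst, coeff_biM_eq_coeff_truncQSym hT hc' hsnd]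
    _ = MvPowerSeries.coeff ν ((qsh c c').sum fun d q => q • trunc d) := by
        rw [truncQSym_mul colMonomial colMonomial_add, Finsupp.linearCombination_apply]
    _ = MvPowerSeries.coeff ν ((qsh c c').sum fun d q => q • biM d) := by
        rw [Finsupp.sum, Finsupp.sum, map_sum, map_sum]
        refine sum_congr rfl fun d hd => ?_
        rw [map_smul, map_smul,
          coeff_biM_eq_coeff_truncQSym hT (hc.of_mem_support_qsh hc' hd) le_rfl]

/-- The columns with positive first entry, so that `LastMem upperPositive` is `UpperLeftWeak`. -/
def upperPositive : AddSubsemigroup (ℕ × ℕ) where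
  carrier := {p | 0 < p.1}
  add_mem' := fun hp _ => Nat.add_pos_left hp _

end Bimonomial

theorem stmt2_general (T : AddSubsemigroup (ℕ × ℕ)) (hT : 0 ∉ T) (c c' : List (ℕ × ℕ))
    (hc : LastMem T c) (hc' : LastMem T c') :
    (∀ ν : (ℕ+ ⊕ ℕ+) →₀ ℕ,
      {I : Fin c.length → ℕ+ | StrictMono I ∧ bimon c I = ν}.Finite ∧
      {I : Fin c'.length → ℕ+ | StrictMono I ∧ bimon c' I = ν}.Finite) ∧
    (∀ d ∈ (qsh c c').support, LastMem T d) ∧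
    biM c * biM c' = (qsh c c').sum fun d q => q • biM d :=
  ⟨fun ν => ⟨finite_setOf_strictMono_bimon_eq hT hc ν, finite_setOf_strictMono_bimon_eq hT hc' ν⟩,
    fun _ hd => hc.of_mem_support_qsh hc' hd, biM_mul_biM hT hc hc'⟩

/-- For upper-left weak bicompositions (α;β), (α';β'), the power series
M_{(α;β)}(X,Y) is well defined (every coefficient-count is finite), every bicomposition
occurring in the quasi-shuffle product (α;β)*(α';β') over ℕ×ℕ is again upper-left weak, and
M_{(α;β)}(X,Y) · M_{(α';β')}(X,Y) = M_{(α;β)*(α';β')}(X,Y) in ℚ[[X,Y]], where M is extended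
ℚ-linearly. -/
theorem stmt2 (c c' : List (ℕ × ℕ))
    (hc : UpperLeftWeak c) (hc' : UpperLeftWeak c') :
    (∀ ν : (ℕ+ ⊕ ℕ+) →₀ ℕ,
      {I : Fin c.length → ℕ+ | StrictMono I ∧ bimon c I = ν}.Finite ∧
      {I : Fin c'.length → ℕ+ | StrictMono I ∧ bimon c' I = ν}.Finite) ∧
    (∀ d ∈ (qsh c c').support, UpperLeftWeak d) ∧
    biM c * biM c' = (qsh c c').sum fun d q => q • biM d := by
  exact stmt2_general upperPositive (lt_irrefl 0) c c' hc hc'
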